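/- arXiv:2109.13450 — 2 statements merged into one kernel-verified Lean document; each statement's English description precedes it below -/
import Mathlib

section
/- For every real constant c with 0 < c < 1, the ratio γ(s, c·s)/Γ(s) tends to 0 as s → +∞ (s ranging over the positive reals). -/
/-!
For every `r ≥ 1` and `0 ≤ t ≤ x` we have `e^(-t) ≤ e^((r-1)x) e^(-rt)`. Integrating this against
`t^(s-1)`, and extending the integral on the right to `(0, ∞)`, gives the Chernoff-type bound
`γ(s, x) ≤ e^((r-1)x) r^(-s) Γ(s)`. For `x = c s` the right-hand side is smallest at `r = 1/c`,
where it equals `(c e^(1-c))^s Γ(s)`; and `c e^(1-c) < 1` because `c < e^(c-1)`.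
-/

open Filter Topology

/-- The lower incomplete gamma function `γ(s,x) = ∫₀ˣ t^(s-1) e^(-t) dt`. -/
noncomputable def lowerGamma (s x : ℝ) : ℝ := ∫ t in (0:ℝ)..x, t ^ (s - 1) * Real.exp (-t)

open MeasureTheory Set

theorem mul_exp_one_sub_lt_one {c : ℝ} (hc : c ≠ 1) : c * Real.exp (1 - c) < 1 := by
  have hlt : c < Real.exp (c - 1) := by
    simpa only [sub_add_cancel] using Real.add_one_lt_exp (sub_ne_zero.mpr hc)
  calc c * Real.exp (1 - c) < Real.exp (c - 1) * Real.exp (1 - c) := by gcongr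
    _ = 1 := by rw [← Real.exp_add, sub_add_sub_cancel, sub_self, Real.exp_zero]

theorem exp_neg_le_exp_mul_exp_neg_mul {r t x : ℝ} (hr : 1 ≤ r) (htx : t ≤ x) :
    Real.exp (-t) ≤ Real.exp ((r - 1) * x) * Real.exp (-(r * t)) := by
  rw [← Real.exp_add, Real.exp_le_exp]
  linarith [mul_le_mul_of_nonneg_left htx (sub_nonneg.mpr hr)]

theorem integrableOn_rpow_sub_one_mul_exp_neg_mul_Ioi {s r : ℝ} (hs : 0 < s) (hr : 0 < r) :
    IntegrableOn (fun t : ℝ => t ^ (s - 1) * Real.exp (-(r * t))) (Ioi 0) := by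
  simpa only [Real.rpow_one, neg_mul] using
    integrableOn_rpow_mul_exp_neg_mul_rpow (by linarith : -1 < s - 1) one_pos hr

theorem lowerGamma_nonneg (s : ℝ) {x : ℝ} (hx : 0 ≤ x) : 0 ≤ lowerGamma s x :=
  intervalIntegral.integral_nonneg hx fun _ ht =>
    mul_nonneg (Real.rpow_nonneg ht.1 _) (Real.exp_nonneg _)

theorem lowerGamma_le_exp_mul_Gamma {s x r : ℝ} (hs : 0 < s) (hx : 0 ≤ x) (hr : 1 ≤ r) :
    lowerGamma s x ≤ Real.exp ((r - 1) * x) * ((1 / r) ^ s * Real.Gamma s) := by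
  have hr0 : 0 < r := one_pos.trans_le hr
  have h_int : IntegrableOn (fun t : ℝ => t ^ (s - 1) * Real.exp (-t)) (Ioi 0) := by
    simpa only [one_mul] using integrableOn_rpow_sub_one_mul_exp_neg_mul_Ioi hs one_pos
  have h_int_tilted := integrableOn_rpow_sub_one_mul_exp_neg_mul_Ioi hs hr0
  calc lowerGamma s x
      = ∫ t in Ioc 0 x, t ^ (s - 1) * Real.exp (-t) := intervalIntegral.integral_of_le hx
    _ ≤ ∫ t in Ioc 0 x, Real.exp ((r - 1) * x) * (t ^ (s - 1) * Real.exp (-(r * t))) := by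
        refine setIntegral_mono_on (h_int.mono_set Ioc_subset_Ioi_self)
          ((h_int_tilted.mono_set Ioc_subset_Ioi_self).const_mul _) measurableSet_Ioc
          fun t ht => ?_
        rw [mul_left_comm]
        exact mul_le_mul_of_nonneg_left (exp_neg_le_exp_mul_exp_neg_mul hr ht.2)
          (Real.rpow_nonneg ht.1.le _)
    _ = Real.exp ((r - 1) * x) * ∫ t in Ioc 0 x, t ^ (s - 1) * Real.exp (-(r * t)) :=
        integral_const_mul _ _
    _ ≤ Real.exp ((r - 1) * x) * ∫ t in Ioi 0, t ^ (s - 1) * Real.exp (-(r * t)) := by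
        refine mul_le_mul_of_nonneg_left (setIntegral_mono_set h_int_tilted ?_
          Ioc_subset_Ioi_self.eventuallyLE) (Real.exp_nonneg _)
        filter_upwards [ae_restrict_mem measurableSet_Ioi] with t ht
        exact mul_nonneg (Real.rpow_nonneg (mem_Ioi.mp ht).le _) (Real.exp_nonneg _)
    _ = Real.exp ((r - 1) * x) * ((1 / r) ^ s * Real.Gamma s) := by
        rw [Real.integral_rpow_mul_exp_neg_mul_Ioi hs hr0]

theorem lowerGamma_mul_self_div_Gamma_le {c s : ℝ} (hc0 : 0 < c) (hc1 : c ≤ 1) (hs : 0 < s) :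
    lowerGamma s (c * s) / Real.Gamma s ≤ (c * Real.exp (1 - c)) ^ s := by
  rw [div_le_iff₀ (Real.Gamma_pos_of_pos hs)]
  have h_exponent : (1 / c - 1) * (c * s) = (1 - c) * s := by field_simp
  calc lowerGamma s (c * s)
      ≤ Real.exp ((1 / c - 1) * (c * s)) * ((1 / (1 / c)) ^ s * Real.Gamma s) :=
        lowerGamma_le_exp_mul_Gamma hs (by positivity) (one_le_one_div hc0 hc1)
    _ = (c * Real.exp (1 - c)) ^ s * Real.Gamma s := by
        rw [h_exponent, one_div_one_div, Real.exp_mul, Real.mul_rpow hc0.le (Real.exp_nonneg _)]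
        ring

/-- For every `0 < c < 1`, `γ(s, c·s)/Γ(s) → 0` as `s → +∞`. -/
theorem lowerGamma_ratio_tendsto_zero (c : ℝ) (hc0 : 0 < c) (hc1 : c < 1) :
    Tendsto (fun s : ℝ => lowerGamma s (c * s) / Real.Gamma s) atTop (𝓝 0) := by
  have h_base_pos : 0 < c * Real.exp (1 - c) := by positivity
  have h_geometric : Tendsto (fun s : ℝ => (c * Real.exp (1 - c)) ^ s) atTop (𝓝 0) :=
    tendsto_rpow_atTop_of_base_lt_one _ (by linarith) (mul_exp_one_sub_lt_one hc1.ne)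
  refine squeeze_zero' ?_ ?_ h_geometric
  · filter_upwards [eventually_gt_atTop 0] with s hs
    exact div_nonneg (lowerGamma_nonneg s (by positivity)) (Real.Gamma_pos_of_pos hs).le
  · filter_upwards [eventually_gt_atTop 0] with s hs
    exact lowerGamma_mul_self_div_Gamma_le hc0 hc1.le hs
end

section
/- Fix an integer N ≥ 1, a real θ > 0 and ε ∈ [0,1]. The function P(β) = ε·γ(N, N·(θ/β)·log(1 + β/θ))/Γ(N) + (1 − ε)·Γ(N, N·(1 + θ/β)·log(1 + β/θ))/Γ(N) is strictly decreasing on (0, ∞). -/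
/-- The upper incomplete gamma function `Γ(s,x) = ∫ₓ^∞ t^(s-1) e^(-t) dt`. -/
noncomputable def upperGamma (s x : ℝ) : ℝ := ∫ t in Set.Ioi x, t ^ (s - 1) * Real.exp (-t)

/-! With `y = 1 + β / θ`, the arguments of the two incomplete gamma functions are `N` times
`log y / (y - 1)` and `y * log y / (y - 1)`. These are the slopes of the secants through `1` of the
strictly concave function `log` and of the strictly convex function `y ↦ y * log y`, so as `β`
grows the first strictly decreases and the second strictly increases. Hence both incomplete gamma
terms strictly decrease, and so does their convex combination. -/

open Set MeasureTheory

section IncompleteGamma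

variable {s : ℝ}

lemma intervalIntegrable_rpow_mul_exp_neg (hs : 0 < s) (a b : ℝ) :
    IntervalIntegrable (fun t : ℝ => t ^ (s - 1) * Real.exp (-t)) volume a b :=
  (intervalIntegral.intervalIntegrable_rpow' (by linarith)).mul_continuousOn (by fun_prop)

lemma integrableOn_Ioi_rpow_mul_exp_neg (hs : 0 < s) :
    IntegrableOn (fun t : ℝ => t ^ (s - 1) * Real.exp (-t)) (Ioi 0) := by
  simpa only [mul_comm] using Real.GammaIntegral_convergent hs

lemma lowerGamma_add_upperGamma (hs : 0 < s) {x : ℝ} (hx : 0 ≤ x) :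
    lowerGamma s x + upperGamma s x = Real.Gamma s := by
  have integrable := integrableOn_Ioi_rpow_mul_exp_neg hs
  calc lowerGamma s x + upperGamma s x
      = ∫ t in Ioi 0, t ^ (s - 1) * Real.exp (-t) :=
        intervalIntegral.integral_interval_add_Ioi integrable
          (integrable.mono_set (Ioi_subset_Ioi hx))
    _ = Real.Gamma s := by simp only [Real.Gamma_eq_integral hs, mul_comm]

lemma strictMonoOn_lowerGamma (hs : 0 < s) : StrictMonoOn (lowerGamma s) (Ici 0) := by
  intro x hx y _ hxy
  rw [← sub_pos]
  calc 0 < ∫ t in x..y, t ^ (s - 1) * Real.exp (-t) := by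
        refine intervalIntegral.intervalIntegral_pos_of_pos_on
          (intervalIntegrable_rpow_mul_exp_neg hs x y) (fun t ht => ?_) hxy
        have ht0 : 0 < t := hx.trans_lt ht.1
        positivity
    _ = lowerGamma s y - lowerGamma s x :=
        (intervalIntegral.integral_interval_sub_left
          (intervalIntegrable_rpow_mul_exp_neg hs 0 y)
          (intervalIntegrable_rpow_mul_exp_neg hs 0 x)).symm

lemma strictAntiOn_upperGamma (hs : 0 < s) : StrictAntiOn (upperGamma s) (Ici 0) := by
  intro x hx y hy hxy
  linarith [strictMonoOn_lowerGamma hs hx hy hxy, lowerGamma_add_upperGamma hs hx,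
    lowerGamma_add_upperGamma hs hy]

end IncompleteGamma

section LogSlopes

lemma strictAntiOn_log_div_sub_one :
    StrictAntiOn (fun y : ℝ => Real.log y / (y - 1)) (Ioi 0 \ {1}) := by
  intro x hx y hy hxy
  simpa only [Real.log_one, sub_zero] using
    strictConcaveOn_log_Ioi.secant_strict_mono (mem_Ioi.2 one_pos) hx.1 hy.1 hx.2 hy.2 hxy

lemma strictMonoOn_mul_log_div_sub_one :
    StrictMonoOn (fun y : ℝ => y * Real.log y / (y - 1)) (Ici 0 \ {1}) := by
  intro x hx y hy hxy
  simpa only [Real.log_one, mul_zero, sub_zero] using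
    Real.strictConvexOn_mul_log.secant_strict_mono (mem_Ici.2 zero_le_one) hx.1 hy.1 hx.2 hy.2 hxy

variable {θ : ℝ}

lemma strictMono_one_add_div (hθ : 0 < θ) : StrictMono (fun β : ℝ => 1 + β / θ) :=
  fun _ _ hlt => by dsimp only; gcongr

lemma one_lt_one_add_div (hθ : 0 < θ) {β : ℝ} (hβ : 0 < β) : 1 < 1 + β / θ :=
  lt_add_of_pos_right 1 (div_pos hβ hθ)

lemma strictAntiOn_div_mul_log_one_add_div (hθ : 0 < θ) :
    StrictAntiOn (fun β : ℝ => θ / β * Real.log (1 + β / θ)) (Ioi 0) := by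
  have mapsTo : MapsTo (fun β : ℝ => 1 + β / θ) (Ioi 0) (Ioi 0 \ {1}) := fun β hβ =>
    have hlt := one_lt_one_add_div hθ hβ
    ⟨one_pos.trans hlt, hlt.ne'⟩
  refine (strictAntiOn_log_div_sub_one.comp_strictMonoOn
    ((strictMono_one_add_div hθ).strictMonoOn _) mapsTo).congr fun β (hβ : 0 < β) => ?_
  simp only [Function.comp_apply, add_sub_cancel_left]
  field_simp

lemma strictMonoOn_one_add_div_mul_log_one_add_div (hθ : 0 < θ) :
    StrictMonoOn (fun β : ℝ => (1 + θ / β) * Real.log (1 + β / θ)) (Ioi 0) := by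
  have mapsTo : MapsTo (fun β : ℝ => 1 + β / θ) (Ioi 0) (Ici 0 \ {1}) := fun β hβ =>
    have hlt := one_lt_one_add_div hθ hβ
    ⟨zero_le_one.trans hlt.le, hlt.ne'⟩
  refine (strictMonoOn_mul_log_div_sub_one.comp
    ((strictMono_one_add_div hθ).strictMonoOn _) mapsTo).congr fun β (hβ : 0 < β) => ?_
  simp only [Function.comp_apply, add_sub_cancel_left]
  field_simp
  ring

end LogSlopes

lemma strictAntiOn_convexCombination {α : Type*} [Preorder α] {f g : α → ℝ} {t : Set α}
    (hf : StrictAntiOn f t) (hg : StrictAntiOn g t) {ε : ℝ} (hε0 : 0 ≤ ε) (hε1 : ε ≤ 1) :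
    StrictAntiOn (fun x => ε * f x + (1 - ε) * g x) t := by
  intro x hx y hy hxy
  have hpos : 0 < ε * (f x - f y) + (1 - ε) * (g x - g y) :=
    convex_Ioi (0 : ℝ) (sub_pos.2 (hf hx hy hxy)) (sub_pos.2 (hg hx hy hxy))
      hε0 (sub_nonneg.2 hε1) (add_sub_cancel ε 1)
  linarith

theorem detection_error_strictAntiOn_general {s θ ε : ℝ} (hs : 0 < s) (hθ : 0 < θ)
    (hε0 : 0 ≤ ε) (hε1 : ε ≤ 1) :
    StrictAntiOn (fun β : ℝ =>
        ε * lowerGamma s (s * (θ / β) * Real.log (1 + β / θ)) / Real.Gamma s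
        + (1 - ε) * upperGamma s (s * (1 + θ / β) * Real.log (1 + β / θ)) / Real.Gamma s)
      (Ioi 0) := by
  have log_nonneg {β : ℝ} (hβ : 0 < β) : 0 ≤ Real.log (1 + β / θ) :=
    Real.log_nonneg (one_lt_one_add_div hθ hβ).le
  have lower : StrictAntiOn
      (fun β : ℝ => lowerGamma s (s * (θ / β * Real.log (1 + β / θ)))) (Ioi 0) :=
    (strictMonoOn_lowerGamma hs).comp_strictAntiOn
      ((strictMono_mul_left_of_pos hs).comp_strictAntiOn (strictAntiOn_div_mul_log_one_add_div hθ))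
      fun β (hβ : 0 < β) => have := log_nonneg hβ; by simp only [mem_Ici]; positivity
  have upper : StrictAntiOn
      (fun β : ℝ => upperGamma s (s * ((1 + θ / β) * Real.log (1 + β / θ)))) (Ioi 0) :=
    (strictAntiOn_upperGamma hs).comp_strictMonoOn
      ((strictMono_mul_left_of_pos hs).comp_strictMonoOn
        (strictMonoOn_one_add_div_mul_log_one_add_div hθ))
      fun β (hβ : 0 < β) => have := log_nonneg hβ; by simp only [mem_Ici]; positivity
  have hdiv : StrictMono (fun p : ℝ => p / Real.Gamma s) :=
    fun _ _ h => div_lt_div_of_pos_right h (Real.Gamma_pos_of_pos hs)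
  simpa only [Function.comp_def, add_div, mul_assoc] using
    hdiv.comp_strictAntiOn (strictAntiOn_convexCombination lower upper hε0 hε1)

/-- The activity detection error probability
`P(β) = ε·γ(N, N·(θ/β)·log(1+β/θ))/Γ(N) + (1-ε)·Γ(N, N·(1+θ/β)·log(1+β/θ))/Γ(N)`
is strictly decreasing in the path-loss coefficient `β` on `(0,∞)`. -/
theorem detection_error_strictAntiOn (N : ℕ) (hN : 1 ≤ N) (θ ε : ℝ) (hθ : 0 < θ)
    (hε0 : 0 ≤ ε) (hε1 : ε ≤ 1) :
    StrictAntiOn (fun β : ℝ =>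
        ε * lowerGamma N (N * (θ / β) * Real.log (1 + β / θ)) / Real.Gamma N
        + (1 - ε) * upperGamma N (N * (1 + θ / β) * Real.log (1 + β / θ)) / Real.Gamma N)
      (Set.Ioi 0) :=
  detection_error_strictAntiOn_general (Nat.cast_pos.2 hN) hθ hε0 hε1
end
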